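/- There exists a constant c > 0 (depending only on ξ and the sequence (x_k)) such that for every polynomial R ∈ ℤ[T] of degree at most 5 and every integer k ≥ 1: the limit δ_k(R(ξ)) := lim_{i→∞} {x_{k+6i,0}·R(ξ)} exists; |δ_k(R(ξ)) − {x_{k,0}·R(ξ)}| ≤ c·‖R‖/X_k; δ_{k+6}(R(ξ)) = δ_k(R(ξ)); and if deg(R) ≤ 3 then also δ_{k+3}(R(ξ)) = δ_k(R(ξ)). -/

import Mathlib

open Polynomial Filter

noncomputable def gold : ℝ := (1 + Real.sqrt 5) / 2

def Mmat (k : ℕ) : Matrix (Fin 2) (Fin 2) ℤ := !![3, (-1)^k; (-1)^(k+1), 0]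

noncomputable def Xnorm (x : ℕ → Matrix (Fin 2) (Fin 2) ℤ) (k : ℕ) : ℝ :=
  max |(x k 0 0 : ℝ)| (max |(x k 0 1 : ℝ)| |(x k 1 1 : ℝ)|)

def MarkoffSeq (ξ : ℝ) (x : ℕ → Matrix (Fin 2) (Fin 2) ℤ) : Prop :=
  (∀ k, 1 ≤ k → x k 0 1 = x k 1 0) ∧
  (∀ k, 1 ≤ k → (x k).det = 1) ∧
  ∃ c₁ c₂ c₃ : ℝ, 0 < c₁ ∧ 0 < c₂ ∧ 0 < c₃ ∧ ∀ k, 1 ≤ k →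
    (c₁ * Xnorm x k ^ gold ≤ Xnorm x (k+1) ∧ Xnorm x (k+1) ≤ c₂ * Xnorm x k ^ gold) ∧
    (|(x k 0 0 : ℝ) * ξ - (x k 0 1 : ℝ)| ≤ c₃ / Xnorm x k ∧
     |(x k 0 1 : ℝ) * ξ - (x k 1 1 : ℝ)| ≤ c₃ / Xnorm x k) ∧
    (x (k+2) = x (k+1) * Mmat (k+1) * x k ∧ x (k+2) = x k * Mmat k * x (k+1)) ∧
    (Xnorm x k < Xnorm x (k+1) ∧ Xnorm x k < (1 + ξ^2) * |(x k 0 0 : ℝ)|)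

def polyNorm (P : Polynomial ℤ) : ℕ := P.support.sup fun i => (P.coeff i).natAbs

noncomputable def distInt (η : ℝ) : ℝ := |η - round η|

noncomputable def ratHeight (α : ℚ) : ℝ := max |(α.num : ℝ)| (α.den : ℝ)

def IsMinIntPoly (α : ℂ) (P : Polynomial ℤ) : Prop :=
  P ≠ 0 ∧ Polynomial.aeval α P = 0 ∧ P.content = 1 ∧ 0 < P.leadingCoeff ∧
  ∀ Q : Polynomial ℤ, Q ≠ 0 → Polynomial.aeval α Q = 0 → P.degree ≤ Q.degree

noncomputable def Qpoly (x : ℕ → Matrix (Fin 2) (Fin 2) ℤ) (k : ℕ) : Polynomial ℤ :=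
  Polynomial.C (x k 0 1 * x (k+1) 1 1 - x k 1 1 * x (k+1) 0 1)
  - Polynomial.C (x k 0 0 * x (k+1) 1 1 - x k 1 1 * x (k+1) 0 0) * Polynomial.X
  + Polynomial.C (x k 0 0 * x (k+1) 0 1 - x k 0 1 * x (k+1) 0 0) * Polynomial.X ^ 2

open Asymptotics

/-- The subring of integers inside the reals. -/
abbrev intReals : Subring ℝ := (Int.castRingHom ℝ).range

theorem intCast_mem_intReals (n : ℤ) : (n : ℝ) ∈ intReals := ⟨n, rfl⟩

theorem neg_one_pow_mem_intReals (k : ℕ) : (-1 : ℝ) ^ k ∈ intReals :=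
  pow_mem (neg_mem (one_mem _)) k

/-- The sequence `f` is within `O(w)` of a sequence of integers. -/
def NearInt (w f : ℕ → ℝ) : Prop :=
  ∃ n : ℕ → ℝ, (∀ k, n k ∈ intReals) ∧ (fun k => f k - n k) =O[⊤] w

namespace NearInt

variable {w f g : ℕ → ℝ}

theorem of_isBigO (hf : f =O[⊤] w) : NearInt w f :=
  ⟨fun _ => 0, fun _ => zero_mem _, by simpa using hf⟩

theorem of_int (hf : ∀ k, f k ∈ intReals) : NearInt w f :=
  ⟨f, hf, (isBigO_zero w _).congr_left fun k => (sub_self (f k)).symm⟩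

theorem add (hf : NearInt w f) (hg : NearInt w g) : NearInt w fun k => f k + g k := by
  obtain ⟨m, hm, hfm⟩ := hf
  obtain ⟨n, hn, hgn⟩ := hg
  refine ⟨fun k => m k + n k, fun k => add_mem (hm k) (hn k), ?_⟩
  exact (hfm.add hgn).congr_left fun k => by ring

theorem int_mul {s : ℕ → ℝ} (hs : ∀ k, s k ∈ intReals) (hs' : s =O[⊤] fun _ => (1 : ℝ))
    (hf : NearInt w f) : NearInt w fun k => s k * f k := by
  obtain ⟨m, hm, hfm⟩ := hf
  refine ⟨fun k => s k * m k, fun k => mul_mem (hs k) (hm k), ?_⟩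
  exact ((hs'.mul hfm).congr_left fun k => by ring).congr_right fun k => by ring

theorem const_mul (c : ℤ) (hf : NearInt w f) : NearInt w fun k => (c : ℝ) * f k :=
  hf.int_mul (fun _ => intCast_mem_intReals c) (isBigO_const_const _ one_ne_zero _)

theorem neg (hf : NearInt w f) : NearInt w fun k => -f k := by
  simpa using hf.const_mul (-1)

theorem sub (hf : NearInt w f) (hg : NearInt w g) : NearInt w fun k => f k - g k := by
  simpa [sub_eq_add_neg] using hf.add hg.neg

theorem congr (hf : NearInt w f) (h : ∀ k, f k = g k) : NearInt w g := by
  rwa [← funext h]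

theorem mono {w' : ℕ → ℝ} (hf : NearInt w f) (hw : w =O[⊤] w') : NearInt w' f := by
  obtain ⟨m, hm, hfm⟩ := hf
  exact ⟨m, hm, hfm.trans hw⟩

theorem shift (hf : NearInt w f) (j : ℕ) :
    NearInt (fun k => w (k + j)) fun k => f (k + j) := by
  obtain ⟨m, hm, hfm⟩ := hf
  exact ⟨fun k => m (k + j), fun k => hm _, hfm.comp_tendsto (k := fun k => k + j) tendsto_top⟩

end NearInt

theorem isBigO_neg_one_pow (j : ℕ) :
    (fun k => (-1 : ℝ) ^ (k + j)) =O[⊤] fun _ => (1 : ℝ) :=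
  isBigO_top.2 ⟨1, fun k => by simp⟩

/-- The asymptotic data of a Markoff type sequence of symmetric matrices
`((y k, u k), (u k, v k))` of determinant one, where `y k * ξ - u k = α k / y k` and
`y k * ξ ^ 2 - v k = β k / y k`. -/
structure MarkoffApprox (ξ : ℝ) (y α β : ℕ → ℝ) : Prop where
  int_y : ∀ k, y k ∈ intReals
  int_u : ∀ k, y k * ξ - α k / y k ∈ intReals
  int_v : ∀ k, y k * ξ ^ 2 - β k / y k ∈ intReals
  beta_eq : ∀ k, β k = 2 * ξ * α k - 1 - α k ^ 2 / y k ^ 2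
  ne : ∀ k, y k ≠ 0
  recur : ∀ k, y (k + 3) + y k = 3 * y (k + 1) * y (k + 2)
  markoff : ∀ k, y k ^ 2 + y (k + 1) ^ 2 + y (k + 2) ^ 2 = 3 * y k * y (k + 1) * y (k + 2)
  inv_bdd : (fun k => (y k)⁻¹) =O[⊤] fun _ => (1 : ℝ)
  mono : y =O[⊤] fun k => y (k + 1)
  theta : (fun k => y (k + 2)) =Θ[⊤] fun k => y k * y (k + 1)
  alpha_bdd : α =O[⊤] fun _ => (1 : ℝ)
  alpha_lim : (fun k => α (k + 1) - (-1) ^ (k + 1) / 3) =O[⊤] fun k => 1 / y k ^ 2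

namespace MarkoffApprox

variable {ξ : ℝ} {y α β : ℕ → ℝ}

theorem theta_three (h : MarkoffApprox ξ y α β) :
    (fun k => y (k + 3)) =Θ[⊤] fun k => y k * y (k + 1) ^ 2 := by
  have h1 : (fun k => y (k + 3)) =Θ[⊤] fun k => y (k + 1) * y (k + 2) :=
    ⟨h.theta.1.comp_tendsto (k := fun k => k + 1) tendsto_top,
      h.theta.2.comp_tendsto (k := fun k => k + 1) tendsto_top⟩
  refine h1.trans (((isTheta_refl _ _).mul h.theta).trans ?_)
  exact (EventuallyEq.of_eq (funext fun k => by ring)).isTheta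

theorem theta_four (h : MarkoffApprox ξ y α β) :
    (fun k => y (k + 4)) =Θ[⊤] fun k => y k ^ 2 * y (k + 1) ^ 3 := by
  have h1 : (fun k => y (k + 4)) =Θ[⊤] fun k => y (k + 2) * y (k + 3) :=
    ⟨h.theta.1.comp_tendsto (k := fun k => k + 2) tendsto_top,
      h.theta.2.comp_tendsto (k := fun k => k + 2) tendsto_top⟩
  refine h1.trans ((h.theta.mul h.theta_three).trans ?_)
  exact (EventuallyEq.of_eq (funext fun k => by ring)).isTheta

theorem div_bdd (h : MarkoffApprox ξ y α β) :
    (fun k => y k / y (k + 1)) =O[⊤] fun _ => (1 : ℝ) := by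
  refine (h.mono.mul (isBigO_refl (fun k => (y (k + 1))⁻¹) _)).congr' ?_ ?_
  · exact Eventually.of_forall fun k => (div_eq_mul_inv _ _).symm
  · exact Eventually.of_forall fun k => mul_inv_cancel₀ (h.ne _)

/-- A sequence comparable to `y k ^ i * y (k + 1) ^ j` with `j ≤ 0` and `i + j < 0` is
`O(1 / y k)`. -/
theorem small (h : MarkoffApprox ξ y α β) {m g : ℕ → ℝ} (n l : ℕ) (hm : m =Θ[⊤] g)
    (hg : ∀ k, g k * y (k + 1) ^ n * (y k ^ l * y k) = y k ^ n) :
    m =O[⊤] fun k => (y k)⁻¹ := by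
  refine hm.1.trans ?_
  have := (isBigO_refl (fun k => (y k)⁻¹) ⊤).mul ((h.div_bdd.pow n).mul (h.inv_bdd.pow l))
  refine (this.congr_left fun k => ?_).congr_right fun k => by simp
  have h0 := h.ne k
  have h1 := h.ne (k + 1)
  rw [div_pow, inv_pow, eq_comm, ← mul_left_inj' (pow_ne_zero n h1),
    ← mul_left_inj' (mul_ne_zero (pow_ne_zero l h0) h0), hg k]
  field_simp

theorem small_ratio (h : MarkoffApprox ξ y α β) :
    (fun k => y (k + 1) / y (k + 2)) =O[⊤] fun k => (y k)⁻¹ :=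
  h.small 0 0 ((isTheta_refl _ _).div h.theta) fun k => by
    have h0 := h.ne k
    have h1 := h.ne (k + 1)
    field_simp

theorem small_prod (h : MarkoffApprox ξ y α β) :
    (fun k => 1 / (y (k + 1) * y (k + 2))) =O[⊤] fun k => (y k)⁻¹ :=
  h.small 2 2 ((isTheta_refl _ _).div ((isTheta_refl _ _).mul h.theta)) fun k => by
    have h0 := h.ne k
    have h1 := h.ne (k + 1)
    field_simp

theorem small_mul {w b m : ℕ → ℝ} (hb : b =O[⊤] fun _ => (1 : ℝ)) (hm : m =O[⊤] w) :
    (fun k => b k * m k) =O[⊤] w := by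
  simpa using hb.mul hm

theorem beta_bdd (h : MarkoffApprox ξ y α β) : β =O[⊤] fun _ => (1 : ℝ) := by
  have h1 : (fun k => 2 * ξ * α k - 1 - α k ^ 2 * (y k)⁻¹ ^ 2) =O[⊤] fun _ => (1 : ℝ) := by
    refine ((h.alpha_bdd.const_mul_left _).sub (isBigO_refl _ _)).sub ?_
    simpa using (h.alpha_bdd.pow 2).mul (h.inv_bdd.pow 2)
  refine h1.congr_left fun k => ?_
  rw [h.beta_eq, inv_pow, div_eq_mul_inv]

theorem alpha_shift (h : MarkoffApprox ξ y α β) (j : ℕ) :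
    (fun k => α (k + j)) =O[⊤] fun _ => (1 : ℝ) :=
  h.alpha_bdd.comp_tendsto (k := fun k => k + j) tendsto_top

theorem beta_shift (h : MarkoffApprox ξ y α β) (j : ℕ) :
    (fun k => β (k + j)) =O[⊤] fun _ => (1 : ℝ) :=
  h.beta_bdd.comp_tendsto (k := fun k => k + j) tendsto_top

theorem alpha_lim_shift (h : MarkoffApprox ξ y α β) (j : ℕ) :
    (fun k => α (k + (j + 1)) - (-1) ^ (k + (j + 1)) / 3) =O[⊤] fun k => 1 / y (k + j) ^ 2 :=
  h.alpha_lim.comp_tendsto (k := fun k => k + j) tendsto_top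

theorem inv_shift (h : MarkoffApprox ξ y α β) (j : ℕ) :
    (fun k => (y (k + j))⁻¹) =O[⊤] fun k => (y k)⁻¹ := by
  induction j with
  | zero => exact isBigO_refl _ _
  | succ j ih =>
    refine IsBigO.trans ?_ ih
    exact (h.mono.inv_rev (Eventually.of_forall fun k hk => absurd hk (h.ne k))).comp_tendsto
      (k := fun k => k + j) tendsto_top

theorem near_shift (h : MarkoffApprox ξ y α β) {f : ℕ → ℝ}
    (hf : NearInt (fun k => (y k)⁻¹) f) (j : ℕ) :
    NearInt (fun k => (y k)⁻¹) fun k => f (k + j) :=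
  (hf.shift j).mono (h.inv_shift j)

theorem near_zero (h : MarkoffApprox ξ y α β) : NearInt (fun k => (y k)⁻¹) y :=
  .of_int h.int_y

theorem near_one (h : MarkoffApprox ξ y α β) :
    NearInt (fun k => (y k)⁻¹) fun k => y k * ξ := by
  refine ((NearInt.of_int h.int_u).add
    (.of_isBigO (small_mul h.alpha_bdd (isBigO_refl _ _)))).congr fun k => ?_
  simp only [div_eq_mul_inv]; ring

theorem near_two (h : MarkoffApprox ξ y α β) :
    NearInt (fun k => (y k)⁻¹) fun k => y k * ξ ^ 2 := by
  refine ((NearInt.of_int h.int_v).add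
    (.of_isBigO (small_mul h.beta_bdd (isBigO_refl _ _)))).congr fun k => ?_
  simp only [div_eq_mul_inv]; ring

/-- `y (k + 2) / y (k + 1) = 3 * y k + O(1 / y k)`. -/
theorem quotient (h : MarkoffApprox ξ y α β) :
    (fun k => y (k + 2) / y (k + 1) - 3 * y k) =O[⊤] fun k => (y k)⁻¹ := by
  have t1 : (fun k => y k ^ 2 / (y (k + 1) * y (k + 2))) =O[⊤] fun k => (y k)⁻¹ :=
    h.small 2 0 ((isTheta_refl _ _).div ((isTheta_refl _ _).mul h.theta)) fun k => by
      have h0 := h.ne k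
      have h1 := h.ne (k + 1)
      field_simp
  refine (t1.add h.small_ratio).neg_left.congr_left fun k => ?_
  have h0 := h.ne k
  have h1 := h.ne (k + 1)
  have h2 := h.ne (k + 2)
  have := h.markoff k
  field_simp
  linear_combination -this

/-- The error in replacing `3 * α (k + 1)` by its limit, scaled by `y (k + 2) / y (k + 1)`. -/
theorem alpha_quotient (h : MarkoffApprox ξ y α β) :
    (fun k => (α (k + 1) - (-1) ^ (k + 1) / 3) * (y (k + 2) / y (k + 1))) =O[⊤]
      fun k => (y k)⁻¹ := by
  refine (h.alpha_lim.mul (isBigO_refl _ _)).trans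
    (h.small 0 0 ((isTheta_refl _ _).mul (h.theta.div (isTheta_refl _ _))) fun k => ?_)
  have h0 := h.ne k
  have h1 := h.ne (k + 1)
  field_simp

theorem near_three (h : MarkoffApprox ξ y α β) :
    NearInt (fun k => (y k)⁻¹) fun k => (y (k + 3) + y k) * ξ ^ 3 := by
  have hN : NearInt (fun k => (y k)⁻¹) fun k => 3 * ((y (k + 1) * ξ - α (k + 1) / y (k + 1)) *
      (y (k + 2) * ξ ^ 2 - β (k + 2) / y (k + 2))) :=
    .of_int fun k => mul_mem (ofNat_mem _ 3) (mul_mem (h.int_u _) (h.int_v _))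
  have hs := isBigO_neg_one_pow 1
  have e1 := (small_mul (h.beta_shift 2) h.small_ratio).const_mul_left (3 * ξ)
  have e2 := (small_mul (h.alpha_shift 1) (small_mul (h.beta_shift 2) h.small_prod)).const_mul_left 3
  have e3 := h.alpha_quotient.const_mul_left (3 * ξ ^ 2)
  have e4 := (small_mul hs h.quotient).const_mul_left (ξ ^ 2)
  have m := (h.near_two.int_mul (fun k => neg_one_pow_mem_intReals (k + 1)) hs).const_mul 3
  refine (((hN.add m).add (.of_isBigO ((e1.sub e2).add (e3.add e4))))).congr fun k => ?_
  have h1 := h.ne (k + 1)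
  have h2 := h.ne (k + 2)
  rw [h.recur]
  push_cast
  field_simp
  ring

theorem near_four (h : MarkoffApprox ξ y α β) :
    NearInt (fun k => (y k)⁻¹) fun k =>
      (y (k + 3) + y k) * ξ ^ 4 - 6 * ((-1) ^ (k + 1) * (y k * ξ ^ 3)) := by
  have hN : NearInt (fun k => (y k)⁻¹) fun k => 3 * ((y (k + 1) * ξ ^ 2 - β (k + 1) / y (k + 1)) *
      (y (k + 2) * ξ ^ 2 - β (k + 2) / y (k + 2))) :=
    .of_int fun k => mul_mem (ofNat_mem _ 3) (mul_mem (h.int_v _) (h.int_v _))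
  have t4 : (fun k => y (k + 2) / y (k + 1) ^ 3) =O[⊤] fun k => (y k)⁻¹ :=
    h.small 2 0 (h.theta.div (isTheta_refl _ _)) fun k => by
      have h0 := h.ne k
      have h1 := h.ne (k + 1)
      field_simp
  have hs := isBigO_neg_one_pow 1
  have e1 := (small_mul (h.beta_shift 2) h.small_ratio).const_mul_left (3 * ξ ^ 2)
  have e2 := (small_mul (h.beta_shift 1) (small_mul (h.beta_shift 2) h.small_prod)).const_mul_left 3
  have e3 := h.alpha_quotient.const_mul_left (6 * ξ ^ 3)
  have e4 := (small_mul hs h.quotient).const_mul_left (2 * ξ ^ 3)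
  have e5 := h.quotient.const_mul_left (3 * ξ ^ 2)
  have e6 := (small_mul (h.alpha_shift 1) (small_mul (h.alpha_shift 1) t4)).const_mul_left
    (3 * ξ ^ 2)
  have m := h.near_two.const_mul 9
  refine (((hN.sub m).add (.of_isBigO ((e1.sub e2).add
    ((e3.add e4).sub (e5.add e6)))))).congr fun k => ?_
  have h1 := h.ne (k + 1)
  have h2 := h.ne (k + 2)
  rw [h.recur, h.beta_eq (k + 1)]
  push_cast
  field_simp
  ring

theorem near_mul_cube (h : MarkoffApprox ξ y α β) :
    NearInt (fun k => (y k)⁻¹) fun k => y (k + 2) * y (k + 4) * ξ ^ 3 := by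
  have hN : NearInt (fun k => (y k)⁻¹) fun k =>
      2 * ((y (k + 2) * ξ - α (k + 2) / y (k + 2)) *
        (y (k + 4) * ξ ^ 2 - β (k + 4) / y (k + 4))) -
      (y (k + 2) * ξ ^ 2 - β (k + 2) / y (k + 2)) * (y (k + 4) * ξ - α (k + 4) / y (k + 4)) :=
    .of_int fun k => sub_mem (mul_mem (ofNat_mem _ 2) (mul_mem (h.int_u _) (h.int_v _)))
      (mul_mem (h.int_v _) (h.int_u _))
  have t1 : (fun k => y (k + 2) / y (k + 4)) =O[⊤] fun k => (y k)⁻¹ :=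
    h.small 2 2 (h.theta.div h.theta_four) fun k => by
      have h0 := h.ne k
      have h1 := h.ne (k + 1)
      field_simp
  have t2 : (fun k => 1 / (y (k + 2) * y (k + 4))) =O[⊤] fun k => (y k)⁻¹ :=
    h.small 4 6 ((isTheta_refl _ _).div (h.theta.mul h.theta_four)) fun k => by
      have h0 := h.ne k
      have h1 := h.ne (k + 1)
      field_simp
  have t3 : (fun k => y (k + 4) / y (k + 2) ^ 3) =O[⊤] fun k => (y k)⁻¹ :=
    h.small 0 0 (h.theta_four.div (h.theta.pow 3)) fun k => by
      have h0 := h.ne k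
      have h1 := h.ne (k + 1)
      field_simp
  have t4 : (fun k => y (k + 3) ^ 2 / (y (k + 2) * y (k + 4))) =O[⊤] fun k => (y k)⁻¹ :=
    h.small 0 0 ((h.theta_three.pow 2).div (h.theta.mul h.theta_four)) fun k => by
      have h0 := h.ne k
      have h1 := h.ne (k + 1)
      field_simp
  have b1 := (((h.beta_shift 4).const_mul_left (2 * ξ)).sub
    ((h.alpha_shift 4).const_mul_left (ξ ^ 2))).sub (isBigO_const_const ξ one_ne_zero _)
  have b2 := (small_mul (h.beta_shift 2) (h.alpha_shift 4)).sub
    ((small_mul (h.alpha_shift 2) (h.beta_shift 4)).const_mul_left 2)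
  have e3 := (small_mul (small_mul (h.alpha_shift 2) (h.alpha_shift 2)) t3).const_mul_left ξ
  have m := (h.near_shift h.near_one 3).const_mul 3
  refine ((hN.add m).add (.of_isBigO (((small_mul b1 t1).add (small_mul b2 t2)).add
    (e3.sub (t4.const_mul_left ξ))))).congr fun k => ?_
  have h2 := h.ne (k + 2)
  have h4 := h.ne (k + 4)
  have hM := h.markoff (k + 2)
  simp only [add_assoc, Nat.reduceAdd] at hM
  rw [h.beta_eq (k + 2)]
  push_cast
  field_simp
  linear_combination (-ξ * y (k + 2) ^ 2) * hM

/-- `y (k + 4) ^ 2 / y (k + 3) ^ 3 = 9 * y (k + 2) ^ 2 / y (k + 3) + O(1 / y k)`. -/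
theorem sq_div_cube (h : MarkoffApprox ξ y α β) :
    (fun k => y (k + 4) ^ 2 / y (k + 3) ^ 3 - 9 * (y (k + 2) ^ 2 / y (k + 3))) =O[⊤]
      fun k => (y k)⁻¹ := by
  have t1 : (fun k => y (k + 2) ^ 3 / (y (k + 3) ^ 2 * y (k + 4))) =O[⊤] fun k => (y k)⁻¹ :=
    h.small 4 4 ((h.theta.pow 3).div ((h.theta_three.pow 2).mul h.theta_four)) fun k => by
      have h0 := h.ne k
      have h1 := h.ne (k + 1)
      field_simp
  have t2 : (fun k => y (k + 2) / y (k + 4)) =O[⊤] fun k => (y k)⁻¹ :=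
    h.small 2 2 (h.theta.div h.theta_four) fun k => by
      have h0 := h.ne k
      have h1 := h.ne (k + 1)
      field_simp
  have t3 : (fun k => y (k + 2) ^ 2 / y (k + 3) ^ 3) =O[⊤] fun k => (y k)⁻¹ :=
    h.small 4 4 ((h.theta.pow 2).div (h.theta_three.pow 3)) fun k => by
      have h0 := h.ne k
      have h1 := h.ne (k + 1)
      field_simp
  refine (((t1.const_mul_left 3).add (t2.const_mul_left 3)).add
    ((h.inv_shift 3).add t3)).neg_left.congr_left fun k => ?_
  have h2 := h.ne (k + 2)
  have h3 := h.ne (k + 3)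
  have h4 := h.ne (k + 4)
  have hM := h.markoff (k + 2)
  simp only [add_assoc, Nat.reduceAdd] at hM
  field_simp
  linear_combination (-y (k + 4) - 3 * y (k + 2) * y (k + 3)) * hM

theorem near_five_upper (h : MarkoffApprox ξ y α β) :
    NearInt (fun k => (y k)⁻¹) fun k => 9 * (y (k + 3) * y (k + 4) ^ 2) * ξ ^ 5 -
      15 * ((-1) ^ (k + 4) * (y (k + 3) * ξ ^ 4)) + 36 * (y (k + 3) * ξ ^ 3) := by
  have hN : NearInt (fun k => (y k)⁻¹) fun k =>
      9 * (2 * ((y (k + 3) * ξ - α (k + 3) / y (k + 3)) *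
        (y (k + 4) * ξ ^ 2 - β (k + 4) / y (k + 4)) ^ 2) -
      (y (k + 3) * ξ ^ 2 - β (k + 3) / y (k + 3)) * ((y (k + 4) * ξ - α (k + 4) / y (k + 4)) *
        (y (k + 4) * ξ ^ 2 - β (k + 4) / y (k + 4)))) :=
    .of_int fun k => mul_mem (ofNat_mem _ 9) (sub_mem
      (mul_mem (ofNat_mem _ 2) (mul_mem (h.int_u _) (pow_mem (h.int_v _) 2)))
      (mul_mem (h.int_v _) (mul_mem (h.int_u _) (h.int_v _))))
  have t1 : (fun k => y (k + 3) / y (k + 4) ^ 2) =O[⊤] fun k => (y k)⁻¹ :=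
    h.small 4 6 (h.theta_three.div (h.theta_four.pow 2)) fun k => by
      have h0 := h.ne k
      have h1 := h.ne (k + 1)
      field_simp
  have t2 : (fun k => 1 / (y (k + 3) * y (k + 4) ^ 2)) =O[⊤] fun k => (y k)⁻¹ :=
    h.small 8 12 ((isTheta_refl _ _).div (h.theta_three.mul (h.theta_four.pow 2))) fun k => by
      have h0 := h.ne k
      have h1 := h.ne (k + 1)
      field_simp
  have t3 : (fun k => (α (k + 3) - (-1) ^ (k + 3) / 3) * (y (k + 4) ^ 2 / y (k + 3) ^ 3)) =O[⊤]
      fun k => (y k)⁻¹ := by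
    refine ((h.alpha_lim_shift 2).mul (isBigO_refl _ _)).trans (h.small 2 2
      (((isTheta_refl _ _).div (h.theta.pow 2)).mul
        ((h.theta_four.pow 2).div (h.theta_three.pow 3))) fun k => ?_)
    have h0 := h.ne k
    have h1 := h.ne (k + 1)
    field_simp
  have t4 : (fun k => (α (k + 4) - (-1) ^ (k + 4) / 3) * y (k + 3)) =O[⊤]
      fun k => (y k)⁻¹ := by
    refine ((h.alpha_lim_shift 3).mul (isBigO_refl _ _)).trans (h.small 2 2
      (((isTheta_refl _ _).div (h.theta_three.pow 2)).mul h.theta_three) fun k => ?_)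
    have h0 := h.ne k
    have h1 := h.ne (k + 1)
    field_simp
  have hA := h.alpha_shift 3
  have hB := h.beta_shift 3
  have hC := h.alpha_shift 4
  have hD := h.beta_shift 4
  have b1 := ((small_mul hC hD).const_mul_left (9 * ξ ^ 2)).sub
    (((small_mul hD hD).const_mul_left (18 * ξ)).add
      ((small_mul hC hC).const_mul_left (27 * ξ ^ 3)))
  have b2 := ((small_mul hB hD).const_mul_left (9 * ξ)).add
    (((small_mul hB hC).const_mul_left (9 * ξ ^ 2)).sub
      ((small_mul hA hD).const_mul_left (36 * ξ ^ 2)))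
  have b3 := ((small_mul hA (small_mul hD hD)).const_mul_left 18).sub
    ((small_mul hB (small_mul hC hD)).const_mul_left 9)
  have b4 := hA.add ((isBigO_neg_one_pow 3).const_mul_left (1 / 3))
  have e4 := (small_mul b4 t3).const_mul_left (9 * ξ ^ 3)
  have e5 := t4.const_mul_left (45 * ξ ^ 4)
  have e6 := h.sq_div_cube.const_mul_left (ξ ^ 3)
  have m := h.near_mul_cube.const_mul 27
  refine ((hN.add m).add (.of_isBigO (((small_mul b1 t1).add
    ((small_mul b2 (h.inv_shift 3)).add (small_mul b3 t2))).add (e4.add (e5.add e6))))).congr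
    fun k => ?_
  have h3 := h.ne (k + 3)
  have h4 := h.ne (k + 4)
  have hM := h.markoff (k + 2)
  simp only [add_assoc, Nat.reduceAdd] at hM
  have hs : ((-1 : ℝ) ^ (k + 3)) ^ 2 = 1 := by rw [← pow_mul, mul_comm, pow_mul]; simp
  have hsq : y (k + 4) ^ 2 / y (k + 3) =
      3 * y (k + 2) * y (k + 4) - y (k + 3) - y (k + 2) ^ 2 / y (k + 3) := by
    field_simp
    linear_combination hM
  have hB : (2 * α (k + 3) * ξ ^ 4 - β (k + 3) * ξ ^ 3) * (y (k + 4) ^ 2 / y (k + 3)) =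
      ξ ^ 3 * (y (k + 4) ^ 2 / y (k + 3)) +
        ξ ^ 3 * α (k + 3) ^ 2 * (y (k + 4) ^ 2 / y (k + 3) ^ 3) := by
    rw [h.beta_eq (k + 3)]
    field_simp
    ring
  have hD : y (k + 3) * β (k + 4) = y (k + 3) * (2 * ξ * α (k + 4) - 1) -
      α (k + 4) ^ 2 * (y (k + 3) / y (k + 4) ^ 2) := by
    rw [h.beta_eq (k + 4)]
    field_simp
  have hexp : y (k + 3) * y (k + 4) ^ 2 * ξ ^ 5 =
      (2 * ((y (k + 3) * ξ - α (k + 3) / y (k + 3)) *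
        (y (k + 4) * ξ ^ 2 - β (k + 4) / y (k + 4)) ^ 2) -
      (y (k + 3) * ξ ^ 2 - β (k + 3) / y (k + 3)) * ((y (k + 4) * ξ - α (k + 4) / y (k + 4)) *
        (y (k + 4) * ξ ^ 2 - β (k + 4) / y (k + 4)))) +
      (2 * α (k + 3) * ξ ^ 4 - β (k + 3) * ξ ^ 3) * (y (k + 4) ^ 2 / y (k + 3)) +
      (3 * ξ ^ 3 * (y (k + 3) * β (k + 4)) - ξ ^ 4 * α (k + 4) * y (k + 3)) +
      (ξ ^ 2 * α (k + 4) * β (k + 4) - 2 * ξ * β (k + 4) ^ 2) * (y (k + 3) / y (k + 4) ^ 2) +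
      (β (k + 3) * (ξ * β (k + 4) + ξ ^ 2 * α (k + 4)) - 4 * ξ ^ 2 * α (k + 3) * β (k + 4)) *
        (y (k + 3))⁻¹ +
      (2 * α (k + 3) * β (k + 4) ^ 2 - β (k + 3) * α (k + 4) * β (k + 4)) *
        (1 / (y (k + 3) * y (k + 4) ^ 2)) := by
    field_simp
    ring
  push_cast
  linear_combination -9 * hexp - 9 * hB - 27 * ξ ^ 3 * hD - 9 * ξ ^ 3 * hsq -
    ξ ^ 3 * (y (k + 4) ^ 2 / y (k + 3) ^ 3) * hs

theorem near_five_lower (h : MarkoffApprox ξ y α β) :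
    NearInt (fun k => (y k)⁻¹) fun k => 9 * (y (k + 3) * y (k + 2) ^ 2) * ξ ^ 5 -
      18 * (y (k + 3) * ξ ^ 3) - 15 * ((-1) ^ (k + 3) * (y k * ξ ^ 4)) +
      36 * (y k * ξ ^ 3) := by
  have hN : NearInt (fun k => (y k)⁻¹) fun k =>
      9 * (4 * ((y (k + 3) * ξ ^ 2 - β (k + 3) / y (k + 3)) *
        ((y (k + 2) * ξ - α (k + 2) / y (k + 2)) *
        (y (k + 2) * ξ ^ 2 - β (k + 2) / y (k + 2)))) -
      3 * ((y (k + 3) * ξ - α (k + 3) / y (k + 3)) *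
        (y (k + 2) * ξ ^ 2 - β (k + 2) / y (k + 2)) ^ 2)) :=
    .of_int fun k => mul_mem (ofNat_mem _ 9) (sub_mem
      (mul_mem (ofNat_mem _ 4) (mul_mem (h.int_v _) (mul_mem (h.int_u _) (h.int_v _))))
      (mul_mem (ofNat_mem _ 3) (mul_mem (h.int_u _) (pow_mem (h.int_v _) 2))))
  have t1 : (fun k => y (k + 3) / y (k + 2) ^ 2) =O[⊤] fun k => (y k)⁻¹ :=
    h.small 0 0 (h.theta_three.div (h.theta.pow 2)) fun k => by
      have h0 := h.ne k
      have h1 := h.ne (k + 1)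
      field_simp
  have t2 : (fun k => 1 / (y (k + 3) * y (k + 2) ^ 2)) =O[⊤] fun k => (y k)⁻¹ :=
    h.small 4 6 ((isTheta_refl _ _).div (h.theta_three.mul (h.theta.pow 2))) fun k => by
      have h0 := h.ne k
      have h1 := h.ne (k + 1)
      field_simp
  have t3 : (fun k => y (k + 2) ^ 2 / y (k + 3) ^ 3) =O[⊤] fun k => (y k)⁻¹ :=
    h.small 4 4 ((h.theta.pow 2).div (h.theta_three.pow 3)) fun k => by
      have h0 := h.ne k
      have h1 := h.ne (k + 1)
      field_simp
  have t4 : (fun k => (α (k + 3) - (-1) ^ (k + 3) / 3) * (y (k + 2) ^ 2 / y (k + 3))) =O[⊤]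
      fun k => (y k)⁻¹ := by
    refine ((h.alpha_lim_shift 2).mul (isBigO_refl _ _)).trans (h.small 2 2
      (((isTheta_refl _ _).div (h.theta.pow 2)).mul
        ((h.theta.pow 2).div h.theta_three)) fun k => ?_)
    have h0 := h.ne k
    have h1 := h.ne (k + 1)
    field_simp
  have t5 : (fun k => y (k + 1) ^ 2 / y (k + 3)) =O[⊤] fun k => (y k)⁻¹ :=
    h.small 0 0 ((isTheta_refl _ _).div h.theta_three) fun k => by
      have h0 := h.ne k
      have h1 := h.ne (k + 1)
      field_simp
  have hA := h.alpha_shift 3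
  have hB := h.beta_shift 3
  have hC := h.alpha_shift 2
  have hD := h.beta_shift 2
  have b1 := (((small_mul hC hC).const_mul_left (18 * ξ ^ 3)).add
    ((small_mul hD hD).const_mul_left (27 * ξ))).sub
      ((small_mul hC hD).const_mul_left (36 * ξ ^ 2))
  have b2 := ((small_mul hA hD).const_mul_left (54 * ξ ^ 2)).sub
    (((small_mul hB hD).const_mul_left (36 * ξ)).add
      ((small_mul hB hC).const_mul_left (36 * ξ ^ 2)))
  have b3 := ((small_mul hB (small_mul hC hD)).const_mul_left 36).sub
    ((small_mul hA (small_mul hD hD)).const_mul_left 27)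
  have b4 := (isBigO_const_const (36 * ξ ^ 3) (one_ne_zero' ℝ) ⊤).sub
    ((isBigO_neg_one_pow 3).const_mul_left (15 * ξ ^ 4))
  have e5 := (small_mul (small_mul hA hA) t3).const_mul_left (-36 * ξ ^ 3)
  have e6 := t4.const_mul_left (45 * ξ ^ 4)
  refine (hN.add (.of_isBigO (((small_mul b1 t1).add
    ((small_mul b2 (h.inv_shift 3)).add (small_mul b3 t2))).add
      ((small_mul b4 t5).add (e5.add e6))))).congr fun k => ?_
  have h2 := h.ne (k + 2)
  have h3 := h.ne (k + 3)
  have hM := h.markoff (k + 1)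
  have hR := h.recur k
  simp only [add_assoc, Nat.reduceAdd] at hM
  have hsq : y (k + 2) ^ 2 / y (k + 3) = y k - y (k + 1) ^ 2 / y (k + 3) := by
    field_simp
    linear_combination hM - y (k + 3) * hR
  have hB : (4 * β (k + 3) * ξ ^ 3 - 3 * α (k + 3) * ξ ^ 4) * (y (k + 2) ^ 2 / y (k + 3)) =
      (5 * α (k + 3) * ξ ^ 4 - 4 * ξ ^ 3) * (y (k + 2) ^ 2 / y (k + 3)) -
        4 * ξ ^ 3 * α (k + 3) ^ 2 * (y (k + 2) ^ 2 / y (k + 3) ^ 3) := by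
    rw [h.beta_eq (k + 3)]
    field_simp
    ring
  have hD : y (k + 3) * β (k + 2) = y (k + 3) * (2 * ξ * α (k + 2) - 1) -
      α (k + 2) ^ 2 * (y (k + 3) / y (k + 2) ^ 2) := by
    rw [h.beta_eq (k + 2)]
    field_simp
  have hexp : y (k + 3) * y (k + 2) ^ 2 * ξ ^ 5 =
      (4 * ((y (k + 3) * ξ ^ 2 - β (k + 3) / y (k + 3)) *
        ((y (k + 2) * ξ - α (k + 2) / y (k + 2)) *
        (y (k + 2) * ξ ^ 2 - β (k + 2) / y (k + 2)))) -
      3 * ((y (k + 3) * ξ - α (k + 3) / y (k + 3)) *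
        (y (k + 2) * ξ ^ 2 - β (k + 2) / y (k + 2)) ^ 2)) +
      (4 * ξ ^ 4 * α (k + 2) * y (k + 3) - 2 * ξ ^ 3 * (y (k + 3) * β (k + 2))) +
      (4 * β (k + 3) * ξ ^ 3 - 3 * α (k + 3) * ξ ^ 4) * (y (k + 2) ^ 2 / y (k + 3)) +
      (3 * ξ * β (k + 2) ^ 2 - 4 * ξ ^ 2 * α (k + 2) * β (k + 2)) *
        (y (k + 3) / y (k + 2) ^ 2) +
      (6 * α (k + 3) * ξ ^ 2 * β (k + 2) -
        4 * β (k + 3) * (ξ * β (k + 2) + ξ ^ 2 * α (k + 2))) * (y (k + 3))⁻¹ +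
      (4 * β (k + 3) * α (k + 2) * β (k + 2) - 3 * α (k + 3) * β (k + 2) ^ 2) *
        (1 / (y (k + 3) * y (k + 2) ^ 2)) := by
    field_simp
    ring
  linear_combination -9 * hexp - 9 * hB + 18 * ξ ^ 3 * hD +
    (36 * ξ ^ 3 - 15 * (-1) ^ (k + 3) * ξ ^ 4) * hsq

theorem near_three_six (h : MarkoffApprox ξ y α β) :
    NearInt (fun k => (y k)⁻¹) fun k => (y (k + 6) - y k) * ξ ^ 3 :=
  ((h.near_shift h.near_three 3).sub h.near_three).congr fun k => by
    simp only [add_assoc, Nat.reduceAdd]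
    ring

theorem near_four_six (h : MarkoffApprox ξ y α β) :
    NearInt (fun k => (y k)⁻¹) fun k => (y (k + 6) - y k) * ξ ^ 4 := by
  have m := (h.near_three.int_mul (fun k => neg_one_pow_mem_intReals (k + 1))
    (isBigO_neg_one_pow 1)).const_mul 6
  refine (((h.near_shift h.near_four 3).sub h.near_four).sub m).congr fun k => ?_
  simp only [add_assoc, Nat.reduceAdd]
  push_cast
  ring

theorem near_five_six (h : MarkoffApprox ξ y α β) :
    NearInt (fun k => (y k)⁻¹) fun k => (y (k + 6) - y k) * ξ ^ 5 := by
  have m4 := (h.near_four.int_mul (fun k => neg_one_pow_mem_intReals (k + 1))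
    (isBigO_neg_one_pow 1)).const_mul 15
  have m3 := h.near_three.const_mul 54
  refine (((h.near_five_upper.sub h.near_five_lower).sub m4).sub m3).congr fun k => ?_
  have e0 := h.recur k
  have e1 := h.recur (k + 1)
  have e2 := h.recur (k + 2)
  have e3 := h.recur (k + 3)
  simp only [add_assoc, Nat.reduceAdd] at e1 e2 e3
  have hs : ((-1 : ℝ) ^ k) ^ 2 = 1 := by rw [← pow_mul, mul_comm, pow_mul]; simp
  push_cast
  simp only [pow_add]
  linear_combination (-ξ ^ 5) * e3 + (-3 * y (k + 4) * ξ ^ 5) * e2 +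
    (3 * y (k + 2) * ξ ^ 5) * e1 + ξ ^ 5 * e0 + (90 * y k * ξ ^ 3) * hs

end MarkoffApprox

theorem distInt_le (u : ℝ) (n : ℤ) : distInt u ≤ |u - n| := round_le u n

theorem distInt_neg (u : ℝ) : distInt (-u) = distInt u := by
  have key : ∀ v : ℝ, distInt (-v) ≤ distInt v := fun v => by
    have := distInt_le (-v) (-round v)
    rwa [Int.cast_neg, neg_sub_neg, abs_sub_comm] at this
  exact (key u).antisymm (by simpa using key (-u))

theorem abs_distInt_sub_le (u v : ℝ) (n : ℤ) : |distInt u - distInt v| ≤ |u - v - n| := by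
  have key : ∀ (u v : ℝ) (n : ℤ), distInt u - distInt v ≤ |u - v - n| := fun u v n => by
    have h1 := distInt_le u (n + round v)
    have h2 := abs_add_le (u - v - n) (v - round v)
    have h3 : u - ((n + round v : ℤ) : ℝ) = u - v - n + (v - round v) := by push_cast; ring
    rw [h3] at h1
    unfold distInt at h1 ⊢
    linarith
  refine abs_sub_le_iff.2 ⟨key u v n, (key v u (-n)).trans (le_of_eq ?_)⟩
  rw [← abs_neg]
  push_cast
  ring_nf

theorem abs_coeff_le_polyNorm (R : ℤ[X]) (i : ℕ) : |(R.coeff i : ℝ)| ≤ polyNorm R := by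
  by_cases hi : i ∈ R.support
  · have : (R.coeff i).natAbs ≤ polyNorm R :=
      Finset.le_sup (f := fun i => (R.coeff i).natAbs) hi
    rw [← Int.cast_abs, Int.abs_eq_natAbs]
    exact_mod_cast this
  · simp [notMem_support_iff.1 hi]

theorem NearInt.exists_bound {w f : ℕ → ℝ} (hf : NearInt w f) :
    ∃ C : ℝ, ∃ n : ℕ → ℤ, 0 ≤ C ∧ ∀ k, |f k - n k| ≤ C * |w k| := by
  obtain ⟨m, hm, h⟩ := hf
  choose n hn using hm
  obtain ⟨C, hC, hb⟩ := h.exists_nonneg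
  refine ⟨C, n, hC, fun k => ?_⟩
  have := (isBigOWith_top.1 hb) k
  rw [← hn k] at this
  exact this

/-- If the sequences `d k * ξ ^ j` with `j ≤ N` are close to integers, then so are the sequences
`d k * R(ξ)` with `deg R ≤ N`, uniformly in `R`. -/
theorem exists_bound_aeval {w d : ℕ → ℝ} {ξ : ℝ} {N : ℕ}
    (h : ∀ j ≤ N, NearInt w fun k => d k * ξ ^ j) :
    ∃ C : ℝ, 0 ≤ C ∧ ∀ R : ℤ[X], R.natDegree ≤ N → ∀ k, ∃ n : ℤ,
      |d k * aeval ξ R - n| ≤ C * polyNorm R * |w k| := by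
  choose! C n hC hn using fun j hj => (h j hj).exists_bound
  refine ⟨∑ j ∈ Finset.range (N + 1), C j, Finset.sum_nonneg fun j hj => hC j (by
    simpa [Nat.lt_succ_iff] using hj), fun R hR k =>
    ⟨∑ j ∈ Finset.range (N + 1), R.coeff j * n j k, ?_⟩⟩
  have e : d k * aeval ξ R - ((∑ j ∈ Finset.range (N + 1), R.coeff j * n j k : ℤ) : ℝ) =
      ∑ j ∈ Finset.range (N + 1), (R.coeff j : ℝ) * (d k * ξ ^ j - n j k) := by
    rw [aeval_eq_sum_range' (Nat.lt_succ_of_le hR), Finset.mul_sum]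
    push_cast
    rw [← Finset.sum_sub_distrib]
    refine Finset.sum_congr rfl fun j _ => ?_
    rw [zsmul_eq_mul]
    ring
  rw [e, Finset.sum_mul, Finset.sum_mul]
  refine (Finset.abs_sum_le_sum_abs _ _).trans (Finset.sum_le_sum fun j hj => ?_)
  have hj : j ≤ N := by simpa [Nat.lt_succ_iff] using hj
  rw [abs_mul]
  calc |(R.coeff j : ℝ)| * |d k * ξ ^ j - n j k|
      ≤ polyNorm R * (C j * |w k|) :=
        mul_le_mul (abs_coeff_le_polyNorm R j) (hn j hj k) (abs_nonneg _) (Nat.cast_nonneg _)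
    _ = C j * polyNorm R * |w k| := by ring

theorem MarkoffApprox.near_six {ξ : ℝ} {y α β : ℕ → ℝ} (h : MarkoffApprox ξ y α β) (j : ℕ)
    (hj : j ≤ 5) : NearInt (fun k => (y k)⁻¹) fun k => (y (k + 6) - y k) * ξ ^ j := by
  interval_cases j
  · exact ((h.near_shift h.near_zero 6).sub h.near_zero).congr fun k => by ring
  · exact ((h.near_shift h.near_one 6).sub h.near_one).congr fun k => by ring
  · exact ((h.near_shift h.near_two 6).sub h.near_two).congr fun k => by ring
  · exact h.near_three_six
  · exact h.near_four_six
  · exact h.near_five_six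

theorem MarkoffApprox.near_add_three {ξ : ℝ} {y α β : ℕ → ℝ} (h : MarkoffApprox ξ y α β) (j : ℕ)
    (hj : j ≤ 3) : NearInt (fun k => (y k)⁻¹) fun k => (y (k + 3) + y k) * ξ ^ j := by
  interval_cases j
  · exact ((h.near_shift h.near_zero 3).add h.near_zero).congr fun k => by ring
  · exact ((h.near_shift h.near_one 3).add h.near_one).congr fun k => by ring
  · exact ((h.near_shift h.near_two 3).add h.near_two).congr fun k => by ring
  · exact h.near_three

/-- A nondecreasing positive sequence that eventually doubles within two steps grows
geometrically. -/
theorem two_pow_mul_le {X : ℕ → ℝ} {K : ℕ} (hmono : Monotone X) (h0 : ∀ k, 0 ≤ X k)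
    (hK : ∀ k, K ≤ k → 2 * X k ≤ X (k + 2)) (k i : ℕ) :
    2 ^ i * X k ≤ 2 ^ K * X (k + 6 * i) := by
  suffices h : 2 ^ i * X k ≤ 2 ^ min i K * X (k + 6 * i) from
    h.trans (mul_le_mul_of_nonneg_right
      (pow_le_pow_right₀ one_le_two (min_le_right _ _)) (h0 _))
  induction i with
  | zero => simp
  | succ i ih =>
    rcases lt_or_ge i K with hi | hi
    · rw [min_eq_left hi.le] at ih
      rw [min_eq_left hi]
      have := hmono (show k + 6 * i ≤ k + 6 * (i + 1) by lia)
      have hp : (0 : ℝ) < 2 ^ i := by positivity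
      rw [pow_succ]
      nlinarith
    · rw [min_eq_right hi] at ih
      rw [min_eq_right (by lia)]
      have h1 := hK (k + 6 * i) (by lia)
      have h2 := hmono (show k + 6 * i + 2 ≤ k + 6 * (i + 1) by lia)
      have hp : (0 : ℝ) < 2 ^ K := by positivity
      rw [pow_succ]
      nlinarith

namespace MarkoffSeq

variable {ξ : ℝ} {x : ℕ → Matrix (Fin 2) (Fin 2) ℤ}

theorem det_eq (hx : MarkoffSeq ξ x) (k : ℕ) :
    x (k + 1) 0 0 * x (k + 1) 1 1 - x (k + 1) 0 1 ^ 2 = 1 := by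
  have h1 := hx.1 (k + 1) (by lia)
  have h2 := hx.2.1 (k + 1) (by lia)
  rw [Matrix.det_fin_two, ← h1] at h2
  linear_combination h2

theorem eq_mul (hx : MarkoffSeq ξ x) (k : ℕ) :
    x (k + 3) = x (k + 1) * Mmat (k + 1) * x (k + 2) := by
  obtain ⟨-, -, c₁, c₂, c₃, -, -, -, h⟩ := hx
  exact (h (k + 1) (by lia)).2.2.1.2

theorem entry_zero_zero (hx : MarkoffSeq ξ x) (k : ℕ) :
    x (k + 3) 0 0 = 3 * x (k + 1) 0 0 * x (k + 2) 0 0 + (-1) ^ (k + 1) *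
      (x (k + 1) 0 0 * x (k + 2) 0 1 - x (k + 1) 0 1 * x (k + 2) 0 0) := by
  rw [hx.eq_mul]
  have := hx.1 (k + 2) (by lia)
  simp [Matrix.mul_apply, Fin.sum_univ_two, Mmat, pow_succ, ← this]
  ring

theorem entry_zero_one (hx : MarkoffSeq ξ x) (k : ℕ) :
    x (k + 3) 0 1 = 3 * x (k + 1) 0 0 * x (k + 2) 0 1 + (-1) ^ (k + 1) *
      (x (k + 1) 0 0 * x (k + 2) 1 1 - x (k + 1) 0 1 * x (k + 2) 0 1) := by
  rw [hx.eq_mul]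
  simp [Matrix.mul_apply, Fin.sum_univ_two, Mmat, pow_succ]
  ring

theorem entry_one_zero (hx : MarkoffSeq ξ x) (k : ℕ) :
    x (k + 3) 0 1 = 3 * x (k + 1) 0 1 * x (k + 2) 0 0 + (-1) ^ (k + 1) *
      (x (k + 1) 0 1 * x (k + 2) 0 1 - x (k + 1) 1 1 * x (k + 2) 0 0) := by
  rw [hx.1 (k + 3) (by lia), hx.eq_mul]
  have h1 := hx.1 (k + 1) (by lia)
  have h2 := hx.1 (k + 2) (by lia)
  simp [Matrix.mul_apply, Fin.sum_univ_two, Mmat, pow_succ, ← h1, ← h2]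
  ring

theorem recurrence (hx : MarkoffSeq ξ x) (k : ℕ) :
    x (k + 4) 0 0 + x (k + 1) 0 0 = 3 * x (k + 2) 0 0 * x (k + 3) 0 0 := by
  have h0 := hx.entry_zero_zero (k + 1)
  have h1 := hx.entry_zero_zero k
  have h2 := hx.entry_zero_one k
  have hd := hx.det_eq (k + 1)
  simp only [add_assoc, Nat.reduceAdd] at h0 hd
  have hs : ((-1 : ℤ) ^ k) ^ 2 = 1 := by rw [← pow_mul, mul_comm, pow_mul]; simp
  rw [h0, h2, h1]
  simp only [pow_add]
  linear_combination (-((-1 : ℤ) ^ k) ^ 2 * x (k + 1) 0 0) * hd - x (k + 1) 0 0 * hs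

theorem markoff_equation (hx : MarkoffSeq ξ x) (k : ℕ) :
    x (k + 1) 0 0 ^ 2 + x (k + 2) 0 0 ^ 2 + x (k + 3) 0 0 ^ 2 =
      3 * x (k + 1) 0 0 * x (k + 2) 0 0 * x (k + 3) 0 0 := by
  have h1 := hx.entry_zero_zero k
  have h2 := hx.entry_zero_one k
  have h3 := hx.entry_one_zero k
  have hd := hx.det_eq k
  have hd' := hx.det_eq (k + 1)
  simp only [add_assoc, Nat.reduceAdd] at hd'
  have hs : ((-1 : ℤ) ^ (k + 1)) ^ 2 = 1 := by rw [← pow_mul, mul_comm, pow_mul]; simp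
  rw [h2] at h3
  rw [h1]
  generalize (-1 : ℤ) ^ (k + 1) = e at *
  set a := x (k + 1) 0 0
  set a' := x (k + 1) 0 1
  set a'' := x (k + 1) 1 1
  set b := x (k + 2) 0 0
  set b' := x (k + 2) 0 1
  set b'' := x (k + 2) 1 1
  linear_combination (e * a * b) * h3 - b ^ 2 * hd - a ^ 2 * hd' +
    ((a * b' - a' * b) ^ 2 - a * b * (a * b'' + a'' * b - 2 * a' * b')) * hs

theorem Xnorm_pos_le (hx : MarkoffSeq ξ x) (k : ℕ) :
    0 < |(x (k + 1) 0 0 : ℝ)| ∧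
      Xnorm x (k + 1) ≤ (1 + ξ ^ 2) * |(x (k + 1) 0 0 : ℝ)| := by
  obtain ⟨-, -, c₁, c₂, c₃, -, -, -, h⟩ := hx
  have h1 := (h (k + 1) (by lia)).2.2.2.2
  have h2 : |(x (k + 1) 0 0 : ℝ)| ≤ Xnorm x (k + 1) := le_max_left _ _
  refine ⟨?_, h1.le⟩
  by_contra hn
  have h3 : |(x (k + 1) 0 0 : ℝ)| = 0 := le_antisymm (not_lt.1 hn) (abs_nonneg _)
  rw [h3] at h1 h2
  linarith

theorem one_le_abs (hx : MarkoffSeq ξ x) (k : ℕ) : 1 ≤ |(x (k + 1) 0 0 : ℝ)| := by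
  have h := (hx.Xnorm_pos_le k).1
  rw [← Int.cast_abs] at h ⊢
  exact_mod_cast h

theorem Xnorm_strictMono (hx : MarkoffSeq ξ x) : StrictMono fun k => Xnorm x (k + 1) := by
  obtain ⟨-, -, c₁, c₂, c₃, -, -, -, h⟩ := hx
  exact strictMono_nat_of_lt_succ fun k => (h (k + 1) (by lia)).2.2.2.1

theorem le_Xnorm (hx : MarkoffSeq ξ x) (k : ℕ) : (k : ℝ) ≤ Xnorm x (k + 1) := by
  have e : ∀ k, Xnorm x k =
      ((max |x k 0 0| (max |x k 0 1| |x k 1 1|) : ℤ) : ℝ) := fun k => by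
    simp [Xnorm]
  induction k with
  | zero => simp [Xnorm]
  | succ k ih =>
    have h := hx.Xnorm_strictMono (Nat.lt_succ_self k)
    simp only [Nat.succ_eq_add_one] at h
    rw [e] at ih h ⊢
    rw [e] at h
    have ih' : (k : ℤ) ≤ max |x (k + 1) 0 0| (max |x (k + 1) 0 1| |x (k + 1) 1 1|) := by
      exact_mod_cast ih
    have h' := Int.cast_lt.1 h
    have : ((k + 1 : ℕ) : ℤ) ≤ max |x (k + 1 + 1) 0 0|
      (max |x (k + 1 + 1) 0 1| |x (k + 1 + 1) 1 1|) := by push_cast; lia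
    exact_mod_cast this

theorem abs_mul_le (hx : MarkoffSeq ξ x) (k : ℕ) :
    |(x (k + 1) 0 0 : ℝ)| * |(x (k + 2) 0 0 : ℝ)| ≤
      (1 + 2 * (1 + ξ ^ 2) ^ 2) * |(x (k + 3) 0 0 : ℝ)| := by
  have hM : (x (k + 1) 0 0 : ℝ) ^ 2 + (x (k + 2) 0 0 : ℝ) ^ 2 + (x (k + 3) 0 0 : ℝ) ^ 2 =
      3 * x (k + 1) 0 0 * x (k + 2) 0 0 * x (k + 3) 0 0 := by
    exact_mod_cast hx.markoff_equation k
  have hM' := congrArg abs hM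
  rw [abs_of_nonneg (by positivity)] at hM'
  simp only [abs_mul, Nat.abs_ofNat] at hM'
  rw [← sq_abs (x (k + 1) 0 0 : ℝ), ← sq_abs (x (k + 2) 0 0 : ℝ),
    ← sq_abs (x (k + 3) 0 0 : ℝ)] at hM'
  have hp := (hx.Xnorm_pos_le (k + 2)).1
  have hX := (hx.Xnorm_pos_le (k + 2)).2
  simp only [add_assoc, Nat.reduceAdd] at hp hX
  have a1 : |(x (k + 1) 0 0 : ℝ)| ≤ Xnorm x (k + 3) :=
    (le_max_left _ _).trans (hx.Xnorm_strictMono.monotone (show k ≤ k + 2 by lia))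
  have a2 : |(x (k + 2) 0 0 : ℝ)| ≤ Xnorm x (k + 3) :=
    (le_max_left _ _).trans (hx.Xnorm_strictMono.monotone (show k + 1 ≤ k + 2 by lia))
  have s1 := pow_le_pow_left₀ (abs_nonneg _) (a1.trans hX) 2
  have s2 := pow_le_pow_left₀ (abs_nonneg _) (a2.trans hX) 2
  refine le_of_mul_le_mul_right ?_ hp
  have : 0 ≤ |(x (k + 1) 0 0 : ℝ)| * |(x (k + 2) 0 0 : ℝ)| * |(x (k + 3) 0 0 : ℝ)| := by
    positivity
  nlinarith

theorem abs_le_mul (hx : MarkoffSeq ξ x) (k : ℕ) :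
    |(x (k + 3) 0 0 : ℝ)| ≤ (3 + 2 * (1 + ξ ^ 2)) *
      (|(x (k + 1) 0 0 : ℝ)| * |(x (k + 2) 0 0 : ℝ)|) := by
  have e : (x (k + 3) 0 0 : ℝ) = 3 * x (k + 1) 0 0 * x (k + 2) 0 0 + (-1) ^ (k + 1) *
      (x (k + 1) 0 0 * x (k + 2) 0 1 - x (k + 1) 0 1 * x (k + 2) 0 0) := by
    exact_mod_cast hx.entry_zero_zero k
  have u1 : |(x (k + 1) 0 1 : ℝ)| ≤ (1 + ξ ^ 2) * |(x (k + 1) 0 0 : ℝ)| :=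
    ((le_max_left _ _).trans (le_max_right _ _)).trans (hx.Xnorm_pos_le k).2
  have u2 : |(x (k + 2) 0 1 : ℝ)| ≤ (1 + ξ ^ 2) * |(x (k + 2) 0 0 : ℝ)| :=
    ((le_max_left _ _).trans (le_max_right _ _)).trans (hx.Xnorm_pos_le (k + 1)).2
  have t1 := abs_add_le (3 * x (k + 1) 0 0 * x (k + 2) 0 0 : ℝ) ((-1) ^ (k + 1) *
      (x (k + 1) 0 0 * x (k + 2) 0 1 - x (k + 1) 0 1 * x (k + 2) 0 0))
  have t2 := abs_sub (x (k + 1) 0 0 * x (k + 2) 0 1 : ℝ) (x (k + 1) 0 1 * x (k + 2) 0 0)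
  rw [← e] at t1
  simp only [abs_mul, abs_neg_one_pow, Nat.abs_ofNat, one_mul] at t1 t2
  have m1 := mul_le_mul_of_nonneg_left u2 (abs_nonneg (x (k + 1) 0 0 : ℝ))
  have m2 := mul_le_mul_of_nonneg_right u1 (abs_nonneg (x (k + 2) 0 0 : ℝ))
  linarith

theorem markoffApprox (hx : MarkoffSeq ξ x) :
    MarkoffApprox ξ (fun k => (x (k + 1) 0 0 : ℝ))
      (fun k => (x (k + 1) 0 0 : ℝ) * (x (k + 1) 0 0 * ξ - x (k + 1) 0 1))
      (fun k => (x (k + 1) 0 0 : ℝ) * (x (k + 1) 0 0 * ξ ^ 2 - x (k + 1) 1 1)) := by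
  have ne : ∀ k, (x (k + 1) 0 0 : ℝ) ≠ 0 := fun k => abs_pos.1 (hx.Xnorm_pos_le k).1
  have det : ∀ k, (x (k + 1) 0 0 : ℝ) * x (k + 1) 1 1 - (x (k + 1) 0 1 : ℝ) ^ 2 = 1 :=
    fun k => by exact_mod_cast hx.det_eq k
  have hinv : (fun k => (x (k + 1) 0 0 : ℝ)⁻¹) =O[⊤] fun _ => (1 : ℝ) :=
    isBigO_top.2 ⟨1, fun k => by
      simpa using inv_le_one_of_one_le₀ (hx.one_le_abs k)⟩
  have hmono : (fun k => (x (k + 1) 0 0 : ℝ)) =O[⊤] fun k => (x (k + 2) 0 0 : ℝ) :=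
    isBigO_top.2 ⟨1 + ξ ^ 2, fun k => ((le_max_left _ _).trans
      (hx.Xnorm_strictMono.monotone (Nat.le_succ k))).trans (hx.Xnorm_pos_le (k + 1)).2⟩
  have htheta : (fun k => (x (k + 3) 0 0 : ℝ)) =Θ[⊤]
      fun k => (x (k + 1) 0 0 : ℝ) * x (k + 2) 0 0 :=
    ⟨isBigO_top.2 ⟨_, fun k => by simpa using hx.abs_le_mul k⟩,
      isBigO_top.2 ⟨_, fun k => by simpa using hx.abs_mul_le k⟩⟩
  have halpha : (fun k => (x (k + 1) 0 0 : ℝ) * (x (k + 1) 0 0 * ξ - x (k + 1) 0 1)) =O[⊤]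
      fun _ => (1 : ℝ) := by
    have hx' := hx
    obtain ⟨-, -, c₁, c₂, c₃, -, -, hc, h⟩ := hx'
    refine isBigO_top.2 ⟨c₃, fun k => ?_⟩
    have h1 := (h (k + 1) (by lia)).2.1.1
    have h2 : |(x (k + 1) 0 0 : ℝ)| ≤ Xnorm x (k + 1) := le_max_left _ _
    have h3 : 0 < Xnorm x (k + 1) := (hx.Xnorm_pos_le k).1.trans_le h2
    rw [le_div_iff₀ h3] at h1
    rw [Real.norm_eq_abs, abs_mul, norm_one, mul_one, mul_comm]
    exact (mul_le_mul_of_nonneg_left h2 (abs_nonneg _)).trans h1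
  refine ⟨fun k => intCast_mem_intReals _, fun k => ?_, fun k => ?_, fun k => ?_, ne,
    fun k => by exact_mod_cast hx.recurrence k, fun k => by exact_mod_cast hx.markoff_equation k,
    hinv, hmono, htheta, halpha, ?_⟩
  · rw [mul_div_cancel_left₀ _ (ne k), sub_sub_cancel]
    exact intCast_mem_intReals _
  · rw [mul_div_cancel_left₀ _ (ne k), sub_sub_cancel]
    exact intCast_mem_intReals _
  · have h0 := ne k
    have hd := det k
    field_simp
    linear_combination -hd
  · have a1 : (fun k => (x (k + 2) 0 0 : ℝ) / (x (k + 1) 0 0 * x (k + 3) 0 0)) =O[⊤]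
        fun k => 1 / (x (k + 1) 0 0 : ℝ) ^ 2 := by
      refine ((isTheta_refl _ _).div ((isTheta_refl _ _).mul htheta)).1.congr_right fun k => ?_
      have h0 := ne k
      have h1 := ne (k + 1)
      simp only [add_assoc, Nat.reduceAdd] at h1
      field_simp
    have a2 : (fun k => 1 / (x (k + 2) 0 0 : ℝ) ^ 2) =O[⊤]
        fun k => 1 / (x (k + 1) 0 0 : ℝ) ^ 2 := by
      simpa using (hmono.inv_rev (Eventually.of_forall fun k hk => absurd hk (ne k))).pow 2
    have b0 := halpha
    have b1 := halpha.comp_tendsto (k := fun k => k + 1) (tendsto_top (l := ⊤))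
    have b2 := halpha.comp_tendsto (k := fun k => k + 2) (tendsto_top (l := ⊤))
    have hs := isBigO_neg_one_pow 1
    have e1 := (MarkoffApprox.small_mul b2 a1).const_mul_left (1 / 3)
    have e2 := (MarkoffApprox.small_mul hs (MarkoffApprox.small_mul b0 (MarkoffApprox.small_mul b1
      (isBigO_refl (fun k => 1 / (x (k + 1) 0 0 : ℝ) ^ 2) ⊤)))).const_mul_left (1 / 3)
    have e3 := (MarkoffApprox.small_mul hs (MarkoffApprox.small_mul b1
      (MarkoffApprox.small_mul b1 a2))).const_mul_left (1 / 3)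
    refine ((e1.sub e2).add e3).congr_left fun k => ?_
    have h0 := ne k
    have h1 := ne (k + 1)
    have h2 := ne (k + 2)
    have d1 := det (k + 1)
    have r0 : (x (k + 3) 0 0 : ℝ) = 3 * x (k + 1) 0 0 * x (k + 2) 0 0 + (-1) ^ (k + 1) *
        (x (k + 1) 0 0 * x (k + 2) 0 1 - x (k + 1) 0 1 * x (k + 2) 0 0) := by
      exact_mod_cast hx.entry_zero_zero k
    have r1 : (x (k + 3) 0 1 : ℝ) = 3 * x (k + 1) 0 0 * x (k + 2) 0 1 + (-1) ^ (k + 1) *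
        (x (k + 1) 0 0 * x (k + 2) 1 1 - x (k + 1) 0 1 * x (k + 2) 0 1) := by
      exact_mod_cast hx.entry_zero_one k
    simp only [Function.comp_apply, add_assoc, Nat.reduceAdd] at h1 h2 d1 ⊢
    have key : (x (k + 3) 0 0 * ξ - x (k + 3) 0 1 : ℝ) * x (k + 2) 0 0 =
        3 * x (k + 1) 0 0 * (x (k + 2) 0 0 * (x (k + 2) 0 0 * ξ - x (k + 2) 0 1)) +
        (-1) ^ (k + 1) * ((x (k + 1) 0 0 * ξ - x (k + 1) 0 1) *
          (x (k + 2) 0 0 * (x (k + 2) 0 0 * ξ - x (k + 2) 0 1)) -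
          x (k + 1) 0 0 * (1 + (x (k + 2) 0 0 * ξ - x (k + 2) 0 1) ^ 2)) := by
      rw [r0, r1]
      linear_combination (-(-1) ^ (k + 1) * x (k + 1) 0 0 : ℝ) * d1
    field_simp
    linear_combination key

end MarkoffSeq

/-- The norms grow at least geometrically along steps of length six. -/
theorem MarkoffSeq.exists_growth {ξ : ℝ} {x : ℕ → Matrix (Fin 2) (Fin 2) ℤ}
    (hx : MarkoffSeq ξ x) : ∃ K : ℕ, ∀ k i : ℕ,
      2 ^ i * Xnorm x (k + 1) ≤ 2 ^ K * Xnorm x (k + 6 * i + 1) := by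
  set B := (1 + ξ ^ 2) ^ 2 * (1 + 2 * (1 + ξ ^ 2) ^ 2) with hB
  obtain ⟨K, hK⟩ := exists_nat_ge (2 * B)
  have hpos : ∀ k, 0 < Xnorm x (k + 1) := fun k =>
    (hx.Xnorm_pos_le k).1.trans_le (le_max_left _ _)
  refine ⟨K, two_pow_mul_le (X := fun k => Xnorm x (k + 1)) hx.Xnorm_strictMono.monotone
    (fun k => (hpos k).le) fun k hk => ?_⟩
  have h1 : Xnorm x (k + 1) * Xnorm x (k + 2) ≤ B * Xnorm x (k + 3) := by
    calc Xnorm x (k + 1) * Xnorm x (k + 2)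
        ≤ ((1 + ξ ^ 2) * |(x (k + 1) 0 0 : ℝ)|) * ((1 + ξ ^ 2) * |(x (k + 2) 0 0 : ℝ)|) :=
          mul_le_mul (hx.Xnorm_pos_le k).2 (hx.Xnorm_pos_le (k + 1)).2 (hpos (k + 1)).le
            (by positivity)
      _ = (1 + ξ ^ 2) ^ 2 * (|(x (k + 1) 0 0 : ℝ)| * |(x (k + 2) 0 0 : ℝ)|) := by ring
      _ ≤ (1 + ξ ^ 2) ^ 2 * ((1 + 2 * (1 + ξ ^ 2) ^ 2) * |(x (k + 3) 0 0 : ℝ)|) :=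
          mul_le_mul_of_nonneg_left (hx.abs_mul_le k) (by positivity)
      _ ≤ (1 + ξ ^ 2) ^ 2 * ((1 + 2 * (1 + ξ ^ 2) ^ 2) * Xnorm x (k + 3)) := by
          gcongr
          exact le_max_left _ _
      _ = B * Xnorm x (k + 3) := by ring
  have h2 : 2 * B ≤ Xnorm x (k + 2) := by
    have h3 := hx.le_Xnorm (k + 1)
    have h4 : (K : ℝ) ≤ k := by exact_mod_cast hk
    push_cast at h3
    simp only [add_assoc, Nat.reduceAdd] at h3
    linarith
  have hBpos : 0 < B := by positivity
  refine le_of_mul_le_mul_left ?_ hBpos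
  have := mul_le_mul_of_nonneg_left h2 (hpos k).le
  simp only [add_assoc, Nat.reduceAdd]
  linarith

theorem stmt9 (ξ : ℝ) (x : ℕ → Matrix (Fin 2) (Fin 2) ℤ) (hx : MarkoffSeq ξ x) :
    ∃ c : ℝ, 0 < c ∧ ∀ R : Polynomial ℤ, R.natDegree ≤ 5 → ∀ k, 1 ≤ k →
      ∃ δ : ℝ,
        Tendsto (fun i : ℕ =>
          distInt ((x (k+6*i) 0 0 : ℝ) * Polynomial.aeval ξ R)) atTop (nhds δ) ∧
        |δ - distInt ((x k 0 0 : ℝ) * Polynomial.aeval ξ R)|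
          ≤ c * (polyNorm R : ℝ) / Xnorm x k ∧
        Tendsto (fun i : ℕ =>
          distInt ((x (k+6+6*i) 0 0 : ℝ) * Polynomial.aeval ξ R)) atTop (nhds δ) ∧
        (R.natDegree ≤ 3 → Tendsto (fun i : ℕ =>
          distInt ((x (k+3+6*i) 0 0 : ℝ) * Polynomial.aeval ξ R)) atTop (nhds δ)) := by
  have h := hx.markoffApprox
  obtain ⟨C, hC, hsix⟩ := exists_bound_aeval h.near_six
  obtain ⟨C', hC', hthree⟩ := exists_bound_aeval h.near_add_three
  obtain ⟨K, hK⟩ := hx.exists_growth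
  have hpos : ∀ k, 0 < Xnorm x (k + 1) := fun k =>
    (hx.Xnorm_pos_le k).1.trans_le (le_max_left _ _)
  have hinv : ∀ k i, |((x (k + 6 * i + 1) 0 0 : ℝ))⁻¹| ≤
      (1 + ξ ^ 2) * 2 ^ K / Xnorm x (k + 1) * (1 / 2) ^ i := by
    intro k i
    obtain ⟨h1, h2⟩ := hx.Xnorm_pos_le (k + 6 * i)
    have h3 := (hK k i).trans (mul_le_mul_of_nonneg_left h2 (by positivity))
    have := hpos k
    rw [abs_inv, one_div, inv_pow, ← div_eq_mul_inv, div_div, le_div_iff₀ (by positivity),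
      inv_mul_le_iff₀ h1]
    linarith
  refine ⟨2 * (C * ((1 + ξ ^ 2) * 2 ^ K)) + 1, by positivity, fun R hR k hk => ?_⟩
  obtain ⟨k, rfl⟩ : ∃ m, k = m + 1 := ⟨k - 1, by lia⟩
  set f : ℕ → ℝ := fun i => distInt ((x (k + 1 + 6 * i) 0 0 : ℝ) * aeval ξ R) with hf
  set D : ℝ := C * polyNorm R * ((1 + ξ ^ 2) * 2 ^ K / Xnorm x (k + 1)) with hD
  have hstep : ∀ i, dist (f i) (f (i + 1)) ≤ D * (1 / 2) ^ i := by
    intro i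
    obtain ⟨n, hn⟩ := hsix R hR (k + 6 * i)
    rw [sub_mul] at hn
    have e1 : k + 6 * i + 1 = k + 1 + 6 * i := by lia
    have e2 : k + 6 * i + 6 + 1 = k + 1 + 6 * (i + 1) := by lia
    have hi := mul_le_mul_of_nonneg_left (hinv k i)
      (mul_nonneg hC (Nat.cast_nonneg (polyNorm R)))
    rw [e1] at hi
    simp only [e1, e2] at hn
    rw [dist_comm, Real.dist_eq]
    refine ((abs_distInt_sub_le _ _ n).trans hn).trans (hi.trans_eq ?_)
    rw [hD]
    ring
  obtain ⟨δ, hδ⟩ := cauchySeq_tendsto_of_complete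
    (cauchySeq_of_le_geometric (1 / 2) D (by norm_num) hstep)
  refine ⟨δ, hδ, ?_, ?_, fun hR3 => ?_⟩
  · have h0 := dist_le_of_le_geometric_of_tendsto₀ (1 / 2) D (by norm_num) hstep hδ
    rw [dist_comm, Real.dist_eq] at h0
    refine h0.trans ?_
    have hP : (0 : ℝ) ≤ polyNorm R / Xnorm x (k + 1) :=
      div_nonneg (Nat.cast_nonneg _) (hpos k).le
    calc D / (1 - 1 / 2)
        = 2 * (C * ((1 + ξ ^ 2) * 2 ^ K)) * (polyNorm R / Xnorm x (k + 1)) := by rw [hD]; ring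
      _ ≤ (2 * (C * ((1 + ξ ^ 2) * 2 ^ K)) + 1) * (polyNorm R / Xnorm x (k + 1)) := by
          gcongr
          linarith
      _ = _ := by ring
  · refine (hδ.comp (tendsto_add_atTop_nat 1)).congr fun i => ?_
    simp only [hf, Function.comp_apply]
    rw [show k + 1 + 6 * (i + 1) = k + 1 + 6 + 6 * i by ring]
  · set E : ℝ := C' * polyNorm R * ((1 + ξ ^ 2) * 2 ^ K / Xnorm x (k + 1)) with hE
    have hdiff : Tendsto (fun i => distInt ((x (k + 1 + 3 + 6 * i) 0 0 : ℝ) * aeval ξ R) - f i)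
        atTop (nhds 0) := by
      refine squeeze_zero_norm (a := fun i => E * (1 / 2) ^ i) (fun i => ?_) ?_
      · obtain ⟨n, hn⟩ := hthree R hR3 (k + 6 * i)
        have e1 : k + 6 * i + 1 = k + 1 + 6 * i := by lia
        have e2 : k + 6 * i + 3 + 1 = k + 1 + 3 + 6 * i := by lia
        have hi := mul_le_mul_of_nonneg_left (hinv k i)
          (mul_nonneg hC' (Nat.cast_nonneg (polyNorm R)))
        rw [e1] at hi
        simp only [e1, e2] at hn
        rw [add_mul, ← sub_neg_eq_add] at hn
        rw [Real.norm_eq_abs, hf]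
        dsimp only
        rw [← distInt_neg ((x (k + 1 + 6 * i) 0 0 : ℝ) * aeval ξ R)]
        refine ((abs_distInt_sub_le _ _ n).trans hn).trans (hi.trans_eq ?_)
        rw [hE]
        ring
      · simpa using (tendsto_pow_atTop_nhds_zero_of_lt_one (r := (1 / 2 : ℝ)) (by norm_num)
          (by norm_num)).const_mul E
    simpa using hdiff.add hδ
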